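/- arXiv:2510.07157 — 6 statements merged into one kernel-verified Lean document; each statement's English description precedes it below -/
import Mathlib

section
/- Let B, Q be |R|×|R| real matrices with Q symmetric, s ∈ ℝ^{|R|}, λ ∈ ℝ, x_u ∈ ℝ^{|R|} with x_u ≥ 0, and p_l ≤ p_u in ℝ^{|R|}. Let μ be a Borel probability measure on ℝ^{|R|} (in the paper, the Gaussian N(μ₀,Σ)), and let ζ^{(1)}, ζ^{(2)}, … be an i.i.d. sequence of random vectors with common law μ on a probability space (Ω, P). Define h(p,ζ) = (1/2)⟨Q·x(p,ζ), x(p,ζ)⟩ − ⟨s, x(p,ζ)⟩ with x(p,ζ) = proj_{[0,x_u]}(B·p + ζ), f(p) = (λ/2)‖p‖₂² + ∫ h(p,ζ) dμ(ζ), and f_N(p) = (λ/2)‖p‖₂² + (1/N)Σ_{i=1}^N h(p, ζ^{(i)}). Then almost surely, sup_{p ∈ [p_l, p_u]} | f_N(p) − f(p) | → 0 as N → ∞. -/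
open Matrix MeasureTheory ProbabilityTheory Filter

/-- Coordinatewise projection onto the box `[0, x_u]`. -/
noncomputable def boxProj {n : ℕ} (xu : Fin n → ℝ) (y : Fin n → ℝ) : Fin n → ℝ :=
  fun j => max 0 (min (y j) (xu j))

/-- The per-scenario congestion cost
`h(p,ζ) = (1/2)⟨Q x(p,ζ), x(p,ζ)⟩ - ⟨s, x(p,ζ)⟩` with `x(p,ζ) = proj_{[0,x_u]}(B p + ζ)`. -/
noncomputable def congCost {n : ℕ} (Q : Matrix (Fin n) (Fin n) ℝ) (s : Fin n → ℝ)
    (B : Matrix (Fin n) (Fin n) ℝ) (xu : Fin n → ℝ) (p z : Fin n → ℝ) : ℝ :=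
  (1 / 2 : ℝ) * (Q.mulVec (boxProj xu (B.mulVec p + z)) ⬝ᵥ boxProj xu (B.mulVec p + z)) -
    s ⬝ᵥ boxProj xu (B.mulVec p + z)


lemma continuous_boxProj {n : ℕ} (xu : Fin n → ℝ) : Continuous (boxProj xu) := by
  unfold boxProj
  fun_prop

lemma continuous_congCost {n : ℕ} (Q : Matrix (Fin n) (Fin n) ℝ) (s : Fin n → ℝ)
    (B : Matrix (Fin n) (Fin n) ℝ) (xu : Fin n → ℝ) :
    Continuous (fun q : (Fin n → ℝ) × (Fin n → ℝ) => congCost Q s B xu q.1 q.2) := by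
  have h : Continuous (fun q : (Fin n → ℝ) × (Fin n → ℝ) =>
      boxProj xu (B.mulVec q.1 + q.2)) :=
    (continuous_boxProj xu).comp
      ((Continuous.matrix_mulVec continuous_const continuous_fst).add continuous_snd)
  unfold congCost
  exact (continuous_const.mul
    ((Continuous.matrix_mulVec continuous_const h).dotProduct h)).sub
    (continuous_const.dotProduct h)

lemma bounded_congCost {n : ℕ} (Q : Matrix (Fin n) (Fin n) ℝ) (s : Fin n → ℝ)
    (B : Matrix (Fin n) (Fin n) ℝ) (xu : Fin n → ℝ) (hxu : ∀ j, 0 ≤ xu j) :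
    ∃ C : ℝ, ∀ p z, ‖congCost Q s B xu p z‖ ≤ C := by
  have hg : Continuous (fun x : Fin n → ℝ =>
      (1 / 2 : ℝ) * (Q.mulVec x ⬝ᵥ x) - s ⬝ᵥ x) :=
    (continuous_const.mul
      ((Continuous.matrix_mulVec continuous_const continuous_id).dotProduct continuous_id)).sub
      (continuous_const.dotProduct continuous_id)
  obtain ⟨C, hC⟩ := (isCompact_Icc (a := (0 : Fin n → ℝ)) (b := xu)).exists_bound_of_continuousOn
    hg.continuousOn
  refine ⟨C, fun p z => hC (boxProj xu (B.mulVec p + z)) ⟨fun j => ?_, fun j => ?_⟩⟩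
  · exact le_max_left _ _
  · exact max_le (hxu j) (min_le_right _ _)

lemma exists_curry {n : ℕ} (Q : Matrix (Fin n) (Fin n) ℝ) (s : Fin n → ℝ)
    (B : Matrix (Fin n) (Fin n) ℝ) (xu : Fin n → ℝ) (K : Set (Fin n → ℝ)) :
    ∃ F : (Fin n → ℝ) → C(K, ℝ), Continuous F ∧ ∀ z p, F z p = congCost Q s B xu p.1 z := by
  have hg := continuous_congCost Q s B xu
  generalize congCost Q s B xu = g at hg ⊢
  have h1 : Continuous (fun q : (Fin n → ℝ) × K => ((q.2 : Fin n → ℝ), q.1)) := by fun_prop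
  have hG : Continuous (fun q : (Fin n → ℝ) × K => g q.2.1 q.1) := hg.comp h1
  let G : C((Fin n → ℝ) × K, ℝ) := ⟨_, hG⟩
  exact ⟨G.curry, G.curry.continuous, fun z p => G.curry_apply z p⟩

lemma slln_aux {Z E Ω : Type*} [TopologicalSpace Z] [SecondCountableTopology Z]
    [MeasurableSpace Z] [BorelSpace Z]
    [NormedAddCommGroup E] [NormedSpace ℝ E] [CompleteSpace E]
    (μ : Measure Z) [MeasurableSpace Ω] (P : Measure Ω)
    (ζ : ℕ → Ω → Z) (hmeas : ∀ i, Measurable (ζ i))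
    (hindep : iIndepFun ζ P) (hident : ∀ i, P.map (ζ i) = μ)
    (F : Z → E) (hFc : Continuous F) (hFint : Integrable F μ) :
    ∀ᵐ ω ∂P, Tendsto (fun N : ℕ => (N : ℝ)⁻¹ • ∑ i ∈ Finset.range N, F (ζ i ω)) atTop
      (nhds (∫ z, F z ∂μ)) := by
  borelize E
  have hint : Integrable (fun ω => F (ζ 0 ω)) P := by
    rw [← hident 0] at hFint
    exact hFint.comp_measurable (hmeas 0)
  have hmean : ∫ z, F z ∂μ = ∫ ω, F (ζ 0 ω) ∂P := by
    rw [← hident 0] at hFint ⊢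
    rw [integral_map (hmeas 0).aemeasurable hFint.1]
  rw [hmean]
  exact strong_law_ae (μ := P) (fun i ω => F (ζ i ω)) hint
    (fun i j hij => (hindep.indepFun hij).comp hFc.measurable hFc.measurable)
    (fun i => (IdentDistrib.mk (hmeas i).aemeasurable (hmeas 0).aemeasurable
      ((hident i).trans (hident 0).symm)).comp hFc.measurable)

/-- (Uniform consistency of the Monte Carlo objective.)
For i.i.d. scenarios `ζ⁽¹⁾, ζ⁽²⁾, …` with common law `μ`, almost surely
`sup_{p ∈ [p_l,p_u]} |f_N(p) - f(p)| → 0` as `N → ∞`, i.e. the sample-average objectives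
`f_N` converge uniformly on the box `[p_l, p_u]` to the expected objective `f`.
(Here `‖p‖₂² = Σ_j p_j²`.) -/
theorem fN_uniform_consistency {n : ℕ}
    (B Q : Matrix (Fin n) (Fin n) ℝ) (hQ : Q.IsSymm)
    (s : Fin n → ℝ) (lam : ℝ)
    (xu : Fin n → ℝ) (hxu : ∀ j, 0 ≤ xu j)
    (pl pu : Fin n → ℝ) (hplu : pl ≤ pu)
    (μ : Measure (Fin n → ℝ)) [IsProbabilityMeasure μ]
    {Ω : Type*} [MeasurableSpace Ω] (P : Measure Ω) [IsProbabilityMeasure P]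
    (ζ : ℕ → Ω → (Fin n → ℝ))
    (hmeas : ∀ i, Measurable (ζ i))
    (hindep : iIndepFun ζ P)
    (hident : ∀ i, P.map (ζ i) = μ) :
    ∀ᵐ ω ∂P, TendstoUniformlyOn
      (fun (N : ℕ) (p : Fin n → ℝ) =>
        lam / 2 * ∑ j, p j ^ 2 +
          (1 / N : ℝ) * ∑ i ∈ Finset.range N, congCost Q s B xu p (ζ i ω))
      (fun p : Fin n → ℝ =>
        lam / 2 * ∑ j, p j ^ 2 + ∫ z, congCost Q s B xu p z ∂μ)
      atTop (Set.Icc pl pu) := by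
  obtain ⟨C, hC⟩ := bounded_congCost Q s B xu hxu
  have : CompactSpace (Set.Icc pl pu) := isCompact_iff_compactSpace.mp isCompact_Icc
  have : Nonempty (Set.Icc pl pu) := ⟨⟨pl, le_refl _, hplu⟩⟩
  obtain ⟨F, hFc, hFa⟩ : ∃ F : (Fin n → ℝ) → C(Set.Icc pl pu, ℝ), Continuous F ∧
      ∀ z p, F z p = congCost Q s B xu p.1 z :=
    exists_curry Q s B xu (Set.Icc pl pu)
  have hFb : ∀ z, ‖F z‖ ≤ C := fun z =>
    (ContinuousMap.norm_le_of_nonempty _).2 fun p => by rw [hFa]; exact hC p.1 z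
  have hFint : Integrable F μ :=
    Integrable.of_bound hFc.aestronglyMeasurable C (ae_of_all _ hFb)
  have key := slln_aux μ P ζ hmeas hindep hident F hFc hFint
  have hev : ∀ p : Set.Icc pl pu, (∫ z, F z ∂μ) p = ∫ z, congCost Q s B xu p.1 z ∂μ := by
    intro p
    have h := (ContinuousMap.evalCLM ℝ p).integral_comp_comm hFint
    simp only [ContinuousMap.evalCLM_apply, hFa] at h
    exact h.symm
  filter_upwards [key] with ω hω
  rw [Metric.tendsto_atTop] at hω
  rw [Metric.tendstoUniformlyOn_iff]
  intro ε hε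
  obtain ⟨N₀, hN₀⟩ := hω ε hε
  filter_upwards [eventually_ge_atTop N₀] with N hN p hp
  refine lt_of_le_of_lt ?_ (hN₀ N hN)
  have h := ContinuousMap.dist_apply_le_dist
    (f := (N : ℝ)⁻¹ • ∑ i ∈ Finset.range N, F (ζ i ω)) (g := ∫ z, F z ∂μ) (⟨p, hp⟩ : Set.Icc pl pu)
  rw [hev] at h
  rw [dist_add_left, dist_comm]
  simpa [hFa, ContinuousMap.sum_apply] using h
end

section
/- Let B be an |R|×|R| real matrix, K a |𝒦|×|R| real matrix, l ∈ ℝ^{|𝒦|}, x_u ∈ ℝ^{|R|} with x_u ≥ 0, and p_l ≤ p_u in ℝ^{|R|}. Let μ be a Borel probability measure on ℝ^{|R|} and ζ^{(1)}, ζ^{(2)}, … an i.i.d. sequence with common law μ on a probability space (Ω, P). Define x(p,ζ) = proj_{[0,x_u]}(B·p + ζ), c(p) = l − K·∫ x(p,ζ) dμ(ζ), and c_N(p) = l − K·( (1/N)Σ_{i=1}^N x(p, ζ^{(i)}) ). Then almost surely, sup_{p ∈ [p_l,p_u]} ‖ c_N(p) − c(p) ‖ → 0 as N → ∞. -/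
open Matrix MeasureTheory ProbabilityTheory Filter

lemma boxProj_lip {n : ℕ} (xu : Fin n → ℝ) : LipschitzWith 1 (boxProj xu) := by
  refine LipschitzWith.of_dist_le_mul fun x y => ?_
  rw [NNReal.coe_one, one_mul, dist_pi_le_iff dist_nonneg]
  intro j
  refine le_trans ?_ (dist_le_pi_dist x y j)
  simp only [boxProj, Real.dist_eq]
  refine (abs_max_sub_max_le_max _ _ _ _).trans ?_
  rw [sub_self, abs_zero, max_eq_right (abs_nonneg _)]
  refine (abs_min_sub_min_le_max _ _ _ _).trans ?_
  rw [sub_self, abs_zero, max_eq_left (abs_nonneg _)]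

lemma boxProj_bound {n : ℕ} (xu : Fin n → ℝ) (y : Fin n → ℝ) : ‖boxProj xu y‖ ≤ ‖xu‖ := by
  rw [pi_norm_le_iff_of_nonneg (norm_nonneg _)]
  intro j
  refine le_trans ?_ (norm_le_pi_norm xu j)
  simp only [boxProj, Real.norm_eq_abs]
  rw [abs_of_nonneg (le_max_left _ _)]
  exact max_le (abs_nonneg _) ((min_le_right _ _).trans (le_abs_self _))


/-- (Uniform consistency of the Monte Carlo constraint.)
For i.i.d. scenarios `ζ⁽¹⁾, ζ⁽²⁾, …` with common law `μ`, almost surely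
`sup_{p ∈ [p_l,p_u]} ‖c_N(p) - c(p)‖ → 0` as `N → ∞`, i.e. the sample-average constraint
maps `c_N(p) = l - K((1/N) Σᵢ x(p,ζ⁽ⁱ⁾))` converge uniformly on the box `[p_l, p_u]`
to the expected constraint `c(p) = l - K ∫ x(p,ζ) dμ(ζ)`, where
`x(p,ζ) = proj_{[0,x_u]}(B p + ζ)`. -/
theorem cN_uniform_consistency {n k : ℕ}
    (B : Matrix (Fin n) (Fin n) ℝ)
    (K : Matrix (Fin k) (Fin n) ℝ) (l : Fin k → ℝ)
    (xu : Fin n → ℝ) (hxu : ∀ j, 0 ≤ xu j)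
    (pl pu : Fin n → ℝ) (hplu : pl ≤ pu)
    (μ : Measure (Fin n → ℝ)) [IsProbabilityMeasure μ]
    {Ω : Type*} [MeasurableSpace Ω] (P : Measure Ω) [IsProbabilityMeasure P]
    (ζ : ℕ → Ω → (Fin n → ℝ))
    (hmeas : ∀ i, Measurable (ζ i))
    (hindep : iIndepFun ζ P)
    (hident : ∀ i, P.map (ζ i) = μ) :
    ∀ᵐ ω ∂P, TendstoUniformlyOn
      (fun (N : ℕ) (p : Fin n → ℝ) =>
        l - K.mulVec ((1 / N : ℝ) • ∑ i ∈ Finset.range N, boxProj xu (B.mulVec p + ζ i ω)))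
      (fun p : Fin n → ℝ =>
        l - K.mulVec (∫ z, boxProj xu (B.mulVec p + z) ∂μ))
      atTop (Set.Icc pl pu) := by
  classical
  have hbc : Continuous (boxProj xu) := (boxProj_lip xu).continuous
  have hBc : Continuous (fun p : Fin n → ℝ => B.mulVec p) := by fun_prop
  obtain ⟨L, hL⟩ : ∃ L : NNReal, LipschitzWith L (fun p : Fin n → ℝ => B.mulVec p) :=
    ⟨_, (LinearMap.toContinuousLinearMap B.mulVecLin).lipschitz⟩
  have hKu : UniformContinuous (fun v : Fin n → ℝ => l - K.mulVec v) :=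
    uniformContinuous_const.sub (LinearMap.toContinuousLinearMap K.mulVecLin).uniformContinuous
  -- pointwise law of large numbers
  have hpt : ∀ p : Fin n → ℝ, ∀ᵐ ω ∂P, Tendsto
      (fun N : ℕ => (1 / N : ℝ) • ∑ i ∈ Finset.range N, boxProj xu (B.mulVec p + ζ i ω))
      atTop (nhds (∫ z, boxProj xu (B.mulVec p + z) ∂μ)) := by
    intro p
    have hg : Continuous (fun z : Fin n → ℝ => boxProj xu (B.mulVec p + z)) := by fun_prop
    have hid : ∀ i, IdentDistrib (ζ i) (ζ 0) P P := fun i =>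
      ⟨(hmeas i).aemeasurable, (hmeas 0).aemeasurable, by rw [hident, hident]⟩
    have h := strong_law_ae (μ := P) (fun i ω => boxProj xu (B.mulVec p + ζ i ω))
      (Integrable.of_bound (hg.measurable.comp (hmeas 0)).aestronglyMeasurable ‖xu‖
        (Eventually.of_forall fun ω => boxProj_bound _ _))
      (fun i j hij => (hindep.indepFun hij).comp hg.measurable hg.measurable)
      (fun i => (hid i).comp hg.measurable)
    have he : ∫ z, boxProj xu (B.mulVec p + z) ∂μ
        = ∫ ω, boxProj xu (B.mulVec p + ζ 0 ω) ∂P := by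
      rw [← hident 0, integral_map (hmeas 0).aemeasurable hg.aestronglyMeasurable]
    rw [he]
    simpa only [one_div] using h
  have hcont : Continuous (fun p : Fin n → ℝ => ∫ z, boxProj xu (B.mulVec p + z) ∂μ) := by
    refine continuous_of_dominated (bound := fun _ => ‖xu‖) ?_ ?_ (integrable_const _) ?_
    · intro p
      exact (show Continuous (fun z : Fin n → ℝ => boxProj xu (B.mulVec p + z)) by
        fun_prop).aestronglyMeasurable
    · exact fun p => Eventually.of_forall fun z => boxProj_bound _ _
    · exact Eventually.of_forall fun z => by fun_prop
  filter_upwards [ae_all_iff.2 fun m : ℕ => hpt (TopologicalSpace.denseSeq (Fin n → ℝ) m)]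
    with ω hω
  have hlip : ∀ N : ℕ, LipschitzWith L (fun p : Fin n → ℝ =>
      (1 / N : ℝ) • ∑ i ∈ Finset.range N, boxProj xu (B.mulVec p + ζ i ω)) := by
    intro N
    refine LipschitzWith.of_dist_le_mul fun p q => ?_
    rw [dist_eq_norm, ← smul_sub, ← Finset.sum_sub_distrib, norm_smul]
    have h1 : ‖∑ i ∈ Finset.range N,
        (boxProj xu (B.mulVec p + ζ i ω) - boxProj xu (B.mulVec q + ζ i ω))‖
        ≤ N * (L * dist p q) := by
      refine (norm_sum_le_of_le _ (f := fun i => _) (n := fun _ => L * dist p q) ?_).trans ?_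
      · intro i _
        rw [← dist_eq_norm]
        refine ((boxProj_lip xu).dist_le_mul _ _).trans ?_
        rw [NNReal.coe_one, one_mul, dist_add_right]
        exact hL.dist_le_mul p q
      · simp
    have h0 : 0 ≤ L * dist p q := by positivity
    rcases Nat.eq_zero_or_pos N with rfl | hN
    · simpa using h0
    · have hN' : (0 : ℝ) < N := by exact_mod_cast hN
      calc _ ≤ ‖(1 / N : ℝ)‖ * (N * (L * dist p q)) := by gcongr
        _ = L * dist p q := by
          rw [Real.norm_of_nonneg (by positivity)]
          field_simp
  have hEq := (LipschitzWith.uniformEquicontinuous _ L hlip).equicontinuous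
  have hall : ∀ p : Fin n → ℝ, Tendsto
      (fun N : ℕ => (1 / N : ℝ) • ∑ i ∈ Finset.range N, boxProj xu (B.mulVec p + ζ i ω))
      atTop (nhds (∫ z, boxProj xu (B.mulVec p + z) ∂μ)) := by
    intro p
    refine (hEq p).tendsto_of_mem_closure (s := Set.range (TopologicalSpace.denseSeq _))
      (hcont.continuousAt.mono_left inf_le_left) ?_
      (TopologicalSpace.denseRange_denseSeq (Fin n → ℝ) p)
    rintro _ ⟨m, rfl⟩
    exact hω m
  refine hKu.comp_tendstoUniformlyOn (f := fun p => ∫ z, boxProj xu (B.mulVec p + z) ∂μ)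
    (F := fun (N : ℕ) p =>
      (1 / N : ℝ) • ∑ i ∈ Finset.range N, boxProj xu (B.mulVec p + ζ i ω)) ?_
  rw [tendstoUniformlyOn_iff_tendstoUniformly_comp_coe]
  have : CompactSpace (Set.Icc pl pu) := isCompact_iff_compactSpace.1 isCompact_Icc
  have hEq' : Equicontinuous (fun (N : ℕ) (p : Set.Icc pl pu) =>
      (1 / N : ℝ) • ∑ i ∈ Finset.range N, boxProj xu (B.mulVec (p : Fin n → ℝ) + ζ i ω)) :=
    (LipschitzWith.uniformEquicontinuous _ (L * 1) fun N =>
      (hlip N).comp (LipschitzWith.subtype_val _)).equicontinuous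
  have h2 := (hEq'.tendsto_uniformFun_iff_pi atTop
    (fun p : Set.Icc pl pu => ∫ z, boxProj xu (B.mulVec (p : Fin n → ℝ) + z) ∂μ)).2
    (tendsto_pi_nhds.2 fun p => hall p)
  exact UniformFun.tendsto_iff_tendstoUniformly.1 h2
end

section
/- Let B, Q be |R|×|R| real matrices with Q symmetric, s ∈ ℝ^{|R|}, λ ∈ ℝ, x_u ∈ ℝ^{|R|} with x_u > 0 coordinatewise, and ζ^{(1)}, …, ζ^{(N)} ∈ ℝ^{|R|}. Define x^{(i)}(p) = proj_{[0,x_u]}(B·p + ζ^{(i)}) and f_N(p) = (λ/2)‖p‖₂² + (1/N)Σ_{i=1}^N [ (1/2)⟨Q·x^{(i)}(p), x^{(i)}(p)⟩ − ⟨s, x^{(i)}(p)⟩ ]. Suppose p* is nondegenerate: for all i, j, (B·p* + ζ^{(i)})_j ∉ {0, (x_u)_j}. Then f_N is Fréchet differentiable at p* with gradient ∇f_N(p*) = λ·p* + Bᵀ·( (1/N)Σ_{i=1}^N Diag(ω^{(i)})·( Q·x^{(i)}(p*) − s ) ), where ω^{(i)} ∈ {0,1}^{|R|} has ω^{(i)}_j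 = 1 iff 0 < (B·p* + ζ^{(i)})_j < (x_u)_j. -/
open Matrix

theorem clip_hasDerivAt (u t : ℝ) (hu : 0 < u) (h0 : t ≠ 0) (h1 : t ≠ u) :
    HasDerivAt (fun x : ℝ => max 0 (min x u)) (if 0 < t ∧ t < u then 1 else 0) t := by
  rcases lt_or_gt_of_ne h0 with h | h
  · rw [if_neg (by intro hh; linarith [hh.1])]
    refine (hasDerivAt_const t (0 : ℝ)).congr_of_eventuallyEq ?_
    filter_upwards [eventually_lt_nhds h] with x hx
    exact max_eq_left ((min_le_left _ _).trans hx.le)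
  · rcases lt_or_gt_of_ne h1 with h' | h'
    · rw [if_pos ⟨h, h'⟩]
      refine (hasDerivAt_id t).congr_of_eventuallyEq ?_
      filter_upwards [eventually_lt_nhds h', eventually_gt_nhds h] with x hx hx'
      simp [min_eq_left hx.le, max_eq_right hx'.le]
    · rw [if_neg (by intro hh; linarith [hh.2])]
      refine (hasDerivAt_const t u).congr_of_eventuallyEq ?_
      filter_upwards [eventually_gt_nhds h'] with x hx
      simp [min_eq_right hx.le, max_eq_right hu.le]

theorem quad_hasFDerivAt {n : ℕ} (Q : Matrix (Fin n) (Fin n) ℝ) (hQ : Q.IsSymm)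
    (s : Fin n → ℝ) (y : EuclideanSpace ℝ (Fin n) → Fin n → ℝ)
    (Y : Fin n → EuclideanSpace ℝ (Fin n) →L[ℝ] ℝ) (p : EuclideanSpace ℝ (Fin n))
    (h : ∀ j, HasFDerivAt (fun q => y q j) (Y j) p) :
    HasFDerivAt (fun q => (1 / 2 : ℝ) * (Q.mulVec (y q) ⬝ᵥ y q) - s ⬝ᵥ y q)
      (∑ j, (Q.mulVec (y p) - s) j • Y j) p := by
  have hm : ∀ j, HasFDerivAt (fun q => Q.mulVec (y q) j) (∑ k, Q j k • Y k) p := by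
    intro j
    simp only [Matrix.mulVec, dotProduct]
    exact HasFDerivAt.fun_sum fun k _ => (h k).const_mul _
  have h1 : HasFDerivAt (fun q => Q.mulVec (y q) ⬝ᵥ y q)
      (∑ j, (Q.mulVec (y p) j • Y j + y p j • ∑ k, Q j k • Y k)) p := by
    simp only [dotProduct]
    exact HasFDerivAt.fun_sum fun j _ => (hm j).mul (h j)
  have h2 : HasFDerivAt (fun q => s ⬝ᵥ y q) (∑ j, s j • Y j) p := by
    simp only [dotProduct]
    exact HasFDerivAt.fun_sum fun k _ => (h k).const_mul _
  refine ((h1.const_mul (1 / 2)).sub h2).congr_fderiv ?_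
  have key : ∑ j, y p j • ∑ k, Q j k • Y k = ∑ j, Q.mulVec (y p) j • Y j := by
    simp only [Finset.smul_sum, Matrix.mulVec, dotProduct, Finset.sum_smul, smul_smul]
    rw [Finset.sum_comm]
    refine Finset.sum_congr rfl fun j _ => Finset.sum_congr rfl fun k _ => ?_
    rw [hQ.apply, mul_comm]
  rw [Finset.sum_add_distrib, key, ← two_smul ℝ, smul_smul]
  ext v
  simp [_root_.sub_mul, Finset.sum_sub_distrib]

/-- At a nondegenerate point `p*` (no coordinate of any `B p* + ζ⁽ⁱ⁾` on the
projection boundary), the Monte Carlo objective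
`f_N(p) = (λ/2)‖p‖₂² + (1/N) Σᵢ [(1/2)⟨Q x⁽ⁱ⁾(p), x⁽ⁱ⁾(p)⟩ - ⟨s, x⁽ⁱ⁾(p)⟩]`
is (Fréchet) differentiable with gradient
`∇f_N(p*) = λ p* + Bᵀ ((1/N) Σᵢ Diag(ω⁽ⁱ⁾) (Q x⁽ⁱ⁾(p*) - s))`. -/
theorem fN_gradient_at_nondegenerate {n N : ℕ}
    (B Q : Matrix (Fin n) (Fin n) ℝ) (hQ : Q.IsSymm)
    (s : Fin n → ℝ) (lam : ℝ)
    (xu : Fin n → ℝ) (hxu : ∀ j, 0 < xu j)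
    (ζ : Fin N → Fin n → ℝ)
    (pstar : EuclideanSpace ℝ (Fin n))
    (hnd : ∀ i j, (B.mulVec pstar + ζ i) j ≠ 0 ∧ (B.mulVec pstar + ζ i) j ≠ xu j)
    (ω : Fin N → Fin n → ℝ)
    (hω : ∀ i j, ω i j =
      if 0 < (B.mulVec pstar + ζ i) j ∧ (B.mulVec pstar + ζ i) j < xu j then 1 else 0) :
    HasGradientAt
      (fun p : EuclideanSpace ℝ (Fin n) =>
        lam / 2 * ‖p‖ ^ 2 +
          (1 / N : ℝ) * ∑ i : Fin N,
            ((1 / 2 : ℝ) * (Q.mulVec (boxProj xu (B.mulVec p + ζ i)) ⬝ᵥ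
                boxProj xu (B.mulVec p + ζ i)) -
              s ⬝ᵥ boxProj xu (B.mulVec p + ζ i)))
      ((EuclideanSpace.equiv (Fin n) ℝ).symm
        (lam • (EuclideanSpace.equiv (Fin n) ℝ pstar) +
          Bᵀ.mulVec ((1 / N : ℝ) • ∑ i : Fin N,
            (Matrix.diagonal (ω i)).mulVec
              (Q.mulVec (boxProj xu (B.mulVec pstar + ζ i)) - s))))
      pstar := by
  have hL : ∀ i j, HasFDerivAt (fun p : EuclideanSpace ℝ (Fin n) => (B.mulVec p + ζ i) j)
      (∑ k, B j k • (EuclideanSpace.proj k : EuclideanSpace ℝ (Fin n) →L[ℝ] ℝ)) pstar := by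
    intro i j
    simp only [Matrix.mulVec, dotProduct, Pi.add_apply]
    refine HasFDerivAt.add_const _ (HasFDerivAt.fun_sum fun k _ => ?_)
    exact ((EuclideanSpace.proj k :
      EuclideanSpace ℝ (Fin n) →L[ℝ] ℝ).hasFDerivAt).const_mul _
  have hx : ∀ i j, HasFDerivAt
      (fun p : EuclideanSpace ℝ (Fin n) => boxProj xu (B.mulVec p + ζ i) j)
      (ω i j • ∑ k, B j k • (EuclideanSpace.proj k : EuclideanSpace ℝ (Fin n) →L[ℝ] ℝ))
      pstar := by
    intro i j
    rw [hω]
    have hc := clip_hasDerivAt (xu j) _ (hxu j) (hnd i j).1 (hnd i j).2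
    have := HasDerivAt.comp_hasFDerivAt (f := fun p : EuclideanSpace ℝ (Fin n) =>
      (B.mulVec p + ζ i) j) pstar hc (hL i j)
    exact this
  have hg := fun i => quad_hasFDerivAt Q hQ s _ _ pstar (hx i)
  have hn : HasFDerivAt (fun p : EuclideanSpace ℝ (Fin n) => ‖p‖ ^ 2)
      (2 • innerSL ℝ pstar) pstar := (hasStrictFDerivAt_norm_sq pstar).hasFDerivAt
  rw [hasGradientAt_iff_hasFDerivAt]
  refine ((hn.const_mul (lam / 2)).add
    ((HasFDerivAt.fun_sum fun i _ => hg i).const_mul (1 / N : ℝ))).congr_fderiv ?_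
  ext v
  have e : ∀ w : Fin n → ℝ, inner ℝ ((EuclideanSpace.equiv (Fin n) ℝ).symm w) v
      = w ⬝ᵥ v.ofLp := by
    intro w
    simp [PiLp.inner_apply, dotProduct, mul_comm]
  rw [InnerProductSpace.toDual_apply_apply, e, add_dotProduct, Matrix.mulVec_transpose,
    ← Matrix.dotProduct_mulVec, smul_dotProduct, smul_dotProduct, sum_dotProduct]
  have e2 : inner ℝ pstar v = pstar.ofLp ⬝ᵥ v.ofLp := e pstar.ofLp
  simp only [_root_.add_apply, _root_.smul_apply,
    _root_.sum_apply, innerSL_apply_apply, e2, Matrix.mulVec_diagonal, dotProduct,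
    smul_eq_mul, nsmul_eq_mul]
  congr 1
  · simp [EuclideanSpace.equiv]; ring
  · congr 1
    refine Finset.sum_congr rfl fun i _ => Finset.sum_congr rfl fun j _ => ?_
    simp [Matrix.mulVec, dotProduct]
    ring
end

section
/- Let B, Q be |R|×|R| real matrices with Q symmetric, s ∈ ℝ^{|R|}, λ ∈ ℝ, x_u ∈ ℝ^{|R|} with x_u > 0 coordinatewise, and ζ^{(1)}, …, ζ^{(N)} ∈ ℝ^{|R|}. Define f_N as the Monte Carlo objective f_N(p) = (λ/2)‖p‖₂² + (1/N)Σ_{i=1}^N [ (1/2)⟨Q·x^{(i)}(p), x^{(i)}(p)⟩ − ⟨s, x^{(i)}(p)⟩ ] with x^{(i)}(p) = proj_{[0,x_u]}(B·p + ζ^{(i)}). Suppose p* is nondegenerate: for all i, j, (B·p* + ζ^{(i)})_j ∉ {0, (x_u)_j}. Then f_N is twice Fréchet differentiable at p* with Hessian ∇²f_N(p*) = λ·I + (1/N)·Bᵀ·( Σ_{i=1}^N Diag(ω^{(i)})·Q·Diag(ω^{(i)}) )·B, where ω^{(i)} ∈ {0,1}^{|R|} has ω^{(i)}_j = 1 iff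 0 < (B·p* + ζ^{(i)})_j < (x_u)_j. -/
open Matrix

open Filter Topology in
theorem aux_quad {E : Type*} [NormedAddCommGroup E] [NormedSpace ℝ E] (f : E → ℝ) (p0 : E) (c : ℝ)
    (L : E →L[ℝ] ℝ) (M : E →L[ℝ] (E →L[ℝ] ℝ)) (hM : ∀ v w, M v w = M w v)
    (hf : ∀ᶠ p in 𝓝 p0, f p = c + L (p - p0) + (1/2 : ℝ) * M (p - p0) (p - p0)) :
    HasFDerivAt (fderiv ℝ f) M p0 := by
  have hg : ∀ p, HasFDerivAt (fun p => c + L (p - p0) + (1/2 : ℝ) * M (p - p0) (p - p0))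
      (L + M (p - p0)) p := by
    intro p
    have h1 : HasFDerivAt (fun p : E => p - p0) (ContinuousLinearMap.id ℝ E) p :=
      (hasFDerivAt_id p).sub_const p0
    have h2 := (L.hasFDerivAt (x := p - p0)).comp p h1
    have h3 := ((M.hasFDerivAt (x := p - p0)).comp p h1).clm_apply h1
    have h4 := (h2.const_add c).add (h3.const_mul (1/2 : ℝ))
    refine h4.congr_fderiv ?_
    ext v
    have e := hM v (p - p0)
    simp only [ContinuousLinearMap.add_apply, ContinuousLinearMap.smul_apply,
      ContinuousLinearMap.comp_apply, ContinuousLinearMap.flip_apply, Function.comp_apply,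
      ContinuousLinearMap.id_apply, smul_eq_mul, e]
    ring
  have he : fderiv ℝ f =ᶠ[𝓝 p0] fun p => L + M (p - p0) := by
    have := Filter.EventuallyEq.fderiv (𝕜 := ℝ) (f₁ := f) hf
    filter_upwards [this] with p hp
    rw [hp, (hg p).fderiv]
  refine HasFDerivAt.congr_of_eventuallyEq ?_ he
  have h1 : HasFDerivAt (fun p : E => p - p0) (ContinuousLinearMap.id ℝ E) p0 :=
    (hasFDerivAt_id p0).sub_const p0
  have := (HasFDerivAt.comp (g := M) (f := fun p : E => p - p0) p0 M.hasFDerivAt h1).const_add L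
  exact this

open Filter Topology in
theorem aux_proj (u y0 : ℝ) (hu : 0 < u) (h0 : y0 ≠ 0) (h1 : y0 ≠ u) :
    ∀ᶠ y in 𝓝 y0, max 0 (min y u) = max 0 (min y0 u) +
      (if 0 < y0 ∧ y0 < u then 1 else 0) * (y - y0) := by
  rcases lt_or_gt_of_ne h0 with h | h
  · filter_upwards [Iio_mem_nhds h] with y hy
    have hy : y < 0 := hy
    rw [if_neg (by intro h'; linarith [h'.1]), max_eq_left, max_eq_left]
    · simp
    · exact (min_le_left _ _).trans h.le
    · exact (min_le_left _ _).trans hy.le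
  rcases lt_or_gt_of_ne h1 with h' | h'
  · filter_upwards [Ioo_mem_nhds h h'] with y hy
    rw [if_pos ⟨h, h'⟩, min_eq_left hy.2.le, min_eq_left h'.le, max_eq_right hy.1.le,
      max_eq_right h.le]
    ring
  · filter_upwards [Ioi_mem_nhds h'] with y hy
    have hy : u < y := hy
    rw [if_neg (by intro h'; linarith [h'.2]), min_eq_right hy.le, min_eq_right h'.le]
    ring

theorem aux_alg {n : ℕ} (B Q : Matrix (Fin n) (Fin n) ℝ) (hQ : Q.IsSymm) (s x ω d : Fin n → ℝ) :
    (1 / 2 : ℝ) * (Q.mulVec (x + diagonal ω *ᵥ (B *ᵥ d)) ⬝ᵥ (x + diagonal ω *ᵥ (B *ᵥ d))) -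
      s ⬝ᵥ (x + diagonal ω *ᵥ (B *ᵥ d)) =
    ((1 / 2 : ℝ) * (Q.mulVec x ⬝ᵥ x) - s ⬝ᵥ x) +
      (Bᵀ *ᵥ (diagonal ω *ᵥ (Q *ᵥ x - s))) ⬝ᵥ d +
      (1 / 2 : ℝ) * ((Bᵀ * (diagonal ω * Q * diagonal ω) * B) *ᵥ d ⬝ᵥ d) := by
  have key : ∀ a : Fin n → ℝ, (Bᵀ *ᵥ (diagonal ω *ᵥ a)) ⬝ᵥ d = a ⬝ᵥ (diagonal ω *ᵥ (B *ᵥ d)) := by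
    intro a
    rw [mulVec_transpose, ← dotProduct_mulVec, dotProduct_mulVec a, ← mulVec_transpose,
      diagonal_transpose]
  have h2 : (Bᵀ * (diagonal ω * Q * diagonal ω) * B) *ᵥ d =
      Bᵀ *ᵥ (diagonal ω *ᵥ (Q *ᵥ (diagonal ω *ᵥ (B *ᵥ d)))) := by
    simp only [mulVec_mulVec, Matrix.mul_assoc]
  rw [h2, key, key]
  generalize diagonal ω *ᵥ (B *ᵥ d) = y
  have h3 : Q *ᵥ y ⬝ᵥ x = Q *ᵥ x ⬝ᵥ y := by
    rw [dotProduct_comm, dotProduct_mulVec, ← mulVec_transpose, hQ.eq]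
  simp only [mulVec_add, add_dotProduct, dotProduct_add, sub_dotProduct, h3]
  ring

/-- At a nondegenerate point `p*`, the Monte Carlo objective `f_N` is twice
Fréchet differentiable, with Hessian
`∇²f_N(p*) = λ I + (1/N) Bᵀ (Σᵢ Diag(ω⁽ⁱ⁾) Q Diag(ω⁽ⁱ⁾)) B` :
the derivative of `p ↦ fderiv ℝ f_N p` exists at `p*` and is the bilinear map
`(v, w) ↦ ⟨H v, w⟩` associated with that matrix `H`.
(Here `‖p‖₂² = Σ_j p_j²`.) -/
theorem fN_hessian_at_nondegenerate {n N : ℕ}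
    (B Q : Matrix (Fin n) (Fin n) ℝ) (hQ : Q.IsSymm)
    (s : Fin n → ℝ) (lam : ℝ)
    (xu : Fin n → ℝ) (hxu : ∀ j, 0 < xu j)
    (ζ : Fin N → Fin n → ℝ)
    (pstar : Fin n → ℝ)
    (hnd : ∀ i j, (B.mulVec pstar + ζ i) j ≠ 0 ∧ (B.mulVec pstar + ζ i) j ≠ xu j)
    (ω : Fin N → Fin n → ℝ)
    (hω : ∀ i j, ω i j =
      if 0 < (B.mulVec pstar + ζ i) j ∧ (B.mulVec pstar + ζ i) j < xu j then 1 else 0)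
    (fN : (Fin n → ℝ) → ℝ)
    (hfN : ∀ p, fN p =
      lam / 2 * ∑ j, p j ^ 2 +
        (1 / N : ℝ) * ∑ i : Fin N,
          ((1 / 2 : ℝ) * (Q.mulVec (boxProj xu (B.mulVec p + ζ i)) ⬝ᵥ
              boxProj xu (B.mulVec p + ζ i)) -
            s ⬝ᵥ boxProj xu (B.mulVec p + ζ i)))
    (H : Matrix (Fin n) (Fin n) ℝ)
    (hH : H = lam • (1 : Matrix (Fin n) (Fin n) ℝ) +
      (1 / N : ℝ) •
        (Bᵀ * (∑ i : Fin N, Matrix.diagonal (ω i) * Q * Matrix.diagonal (ω i)) * B)) :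
    ∃ f'' : (Fin n → ℝ) →L[ℝ] ((Fin n → ℝ) →L[ℝ] ℝ),
      HasFDerivAt (fderiv ℝ fN) f'' pstar ∧
        ∀ v w : Fin n → ℝ, f'' v w = H.mulVec v ⬝ᵥ w := by
  have hsymm : H.IsSymm := by
    have hD : (∑ i : Fin N, Matrix.diagonal (ω i) * Q * Matrix.diagonal (ω i))ᵀ =
        ∑ i : Fin N, Matrix.diagonal (ω i) * Q * Matrix.diagonal (ω i) := by
      simp [transpose_sum, transpose_mul, hQ.eq, Matrix.mul_assoc]
    rw [Matrix.IsSymm, hH]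
    simp only [transpose_add, transpose_smul, transpose_one, transpose_mul, transpose_transpose,
      hD]
    rw [Matrix.mul_assoc]
  let M0 : (Fin n → ℝ) →ₗ[ℝ] (Fin n → ℝ) →ₗ[ℝ] ℝ :=
    LinearMap.mk₂ ℝ (fun v w => H.mulVec v ⬝ᵥ w)
      (by intro a b c; simp [mulVec_add, add_dotProduct])
      (by intro a b c; simp [mulVec_smul, smul_dotProduct])
      (by intro a b c; simp [dotProduct_add])
      (by intro a b c; simp [dotProduct_smul])
  let M : (Fin n → ℝ) →L[ℝ] ((Fin n → ℝ) →L[ℝ] ℝ) :=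
    LinearMap.toContinuousLinearMap
      ((LinearMap.toContinuousLinearMap : ((Fin n → ℝ) →ₗ[ℝ] ℝ) ≃ₗ[ℝ] _).toLinearMap ∘ₗ M0)
  have hMa : ∀ v w, M v w = H.mulVec v ⬝ᵥ w := fun v w => rfl
  let x0 : Fin N → Fin n → ℝ := fun i => boxProj xu (B.mulVec pstar + ζ i)
  let g : Fin n → ℝ := lam • pstar + (1 / N : ℝ) •
    ∑ i, (Bᵀ *ᵥ (diagonal (ω i) *ᵥ (Q *ᵥ x0 i - s)))
  let L : (Fin n → ℝ) →L[ℝ] ℝ := LinearMap.toContinuousLinearMap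
    (LinearMap.mk (AddHom.mk (fun w => g ⬝ᵥ w) (by intro a b; simp [dotProduct_add]))
      (by intro a b; simp [dotProduct_smul]))
  have hLa : ∀ w, L w = g ⬝ᵥ w := fun w => rfl
  refine ⟨M, aux_quad fN pstar (fN pstar) L M ?_ ?_, hMa⟩
  · intro v w
    rw [hMa, hMa, dotProduct_comm, dotProduct_mulVec, ← mulVec_transpose, hsymm.eq]
  have hev : ∀ᶠ p in nhds pstar, ∀ i j, boxProj xu (B.mulVec p + ζ i) j =
      boxProj xu (B.mulVec pstar + ζ i) j +
        ω i j * ((B.mulVec p + ζ i) j - (B.mulVec pstar + ζ i) j) := by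
    rw [Filter.eventually_all]
    intro i
    rw [Filter.eventually_all]
    intro j
    have hc : Continuous (fun p : Fin n → ℝ => (B.mulVec p + ζ i) j) := by
      have : Continuous (fun p : Fin n → ℝ => B.mulVec p + ζ i) := by fun_prop
      exact (continuous_apply j).comp this
    have := (hc.tendsto pstar).eventually (aux_proj (xu j) _ (hxu j) (hnd i j).1 (hnd i j).2)
    rw [hω i j]
    exact this
  filter_upwards [hev] with p hp
  obtain ⟨d, rfl⟩ : ∃ d, p = pstar + d := ⟨p - pstar, by simp⟩
  have hx : ∀ i, boxProj xu (B.mulVec (pstar + d) + ζ i) =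
      x0 i + diagonal (ω i) *ᵥ (B *ᵥ d) := by
    intro i
    ext j
    rw [hp i j]
    rw [Pi.add_apply (x0 i), mulVec_diagonal]
    simp [x0, mulVec_add]
  have hsq : ∑ j, (pstar + d) j ^ 2 = ∑ j, pstar j ^ 2 + 2 * (pstar ⬝ᵥ d) + d ⬝ᵥ d := by
    simp only [dotProduct, Finset.mul_sum, ← Finset.sum_add_distrib]
    refine Finset.sum_congr rfl fun j _ => ?_
    simp only [Pi.add_apply]
    ring
  have hHd : H *ᵥ d ⬝ᵥ d = lam * (d ⬝ᵥ d) + (1 / N : ℝ) *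
      ∑ i, (Bᵀ * (diagonal (ω i) * Q * diagonal (ω i)) * B) *ᵥ d ⬝ᵥ d := by
    rw [hH, Matrix.mul_sum, Matrix.sum_mul, add_mulVec, smul_mulVec, smul_mulVec, one_mulVec,
      add_dotProduct, smul_dotProduct, smul_dotProduct, sum_mulVec, sum_dotProduct, smul_eq_mul,
      smul_eq_mul]
  have hgd : g ⬝ᵥ d = lam * (pstar ⬝ᵥ d) + (1 / N : ℝ) *
      ∑ i, (Bᵀ *ᵥ (diagonal (ω i) *ᵥ (Q *ᵥ x0 i - s))) ⬝ᵥ d := by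
    simp only [g, add_dotProduct, smul_dotProduct, sum_dotProduct, smul_eq_mul]
  rw [add_sub_cancel_left, hLa, hMa, hHd, hgd, hfN, hfN, hsq]
  simp only [hx, aux_alg B Q hQ, Finset.sum_add_distrib, ← Finset.mul_sum]
  simp only [x0]
  ring
end

section
/- Let Q be a symmetric |R|×|R| real matrix with smallest eigenvalue λ_min(Q), B an |R|×|R| real matrix with ℓ2 operator norm ‖B‖₂, N ≥ 1, and J^{(1)}, …, J^{(N)} diagonal 0–1 matrices. Set Ã = (1/N)·Σ_{i=1}^N J^{(i)}·Q·J^{(i)}. If λ > −min(λ_min(Q), 0)·‖B‖₂², then the symmetric matrix λ·I + Bᵀ·Ã·B is positive definite, i.e. ⟨(λ·I + Bᵀ·Ã·B)·p, p⟩ > 0 for all p ≠ 0. -/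
open Matrix

lemma quad_lower {n : ℕ} (Q : Matrix (Fin n) (Fin n) ℝ) (hQ : Q.IsHermitian) (c : ℝ)
    (hc : ∀ i, c ≤ hQ.eigenvalues i) (v : Fin n → ℝ) :
    c * (v ⬝ᵥ v) ≤ Q.mulVec v ⬝ᵥ v := by
  have hp : (Q - c • (1 : Matrix (Fin n) (Fin n) ℝ)).PosSemidef := by
    have h1 := hQ.spectral_theorem
    rw [Unitary.conjStarAlgAut_apply] at h1
    have h2 : (Q - c • (1 : Matrix (Fin n) (Fin n) ℝ)) =
        (hQ.eigenvectorUnitary : Matrix (Fin n) (Fin n) ℝ) *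
          Matrix.diagonal (fun i => hQ.eigenvalues i - c) *
          (hQ.eigenvectorUnitary : Matrix (Fin n) (Fin n) ℝ)ᴴ := by
      have h3 : Matrix.diagonal (fun i => hQ.eigenvalues i - c) =
          Matrix.diagonal (RCLike.ofReal ∘ hQ.eigenvalues) - c • (1 : Matrix (Fin n) (Fin n) ℝ) := by
        ext i j
        by_cases h : i = j
        · subst h; simp
        · simp [h]
      have h4 : (hQ.eigenvectorUnitary : Matrix (Fin n) (Fin n) ℝ) *
          (hQ.eigenvectorUnitary : Matrix (Fin n) (Fin n) ℝ)ᴴ = 1 :=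
        Unitary.coe_mul_star_self hQ.eigenvectorUnitary
      rw [h3, Matrix.mul_sub, Matrix.sub_mul, Matrix.mul_smul, Matrix.smul_mul, Matrix.mul_one, h4]
      congr 1
    rw [h2]
    exact (Matrix.PosSemidef.diagonal (fun i => sub_nonneg.2 (hc i))).mul_mul_conjTranspose_same _
  have := hp.dotProduct_mulVec_nonneg v
  simp only [star_trivial, Matrix.sub_mulVec, Matrix.smul_mulVec, Matrix.one_mulVec,
    dotProduct_sub, dotProduct_smul, smul_eq_mul] at this
  rw [dotProduct_comm (Q.mulVec v)]
  linarith

lemma norm_bound {n : ℕ} (B : Matrix (Fin n) (Fin n) ℝ) (p : Fin n → ℝ) :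
    B.mulVec p ⬝ᵥ B.mulVec p ≤ ‖Matrix.toEuclideanCLM (𝕜 := ℝ) B‖ ^ 2 * (p ⬝ᵥ p) := by
  have key : ∀ q : Fin n → ℝ, q ⬝ᵥ q = ‖WithLp.toLp 2 q‖ ^ 2 := by
    intro q
    rw [EuclideanSpace.norm_sq_eq]
    simp [dotProduct, sq]
  have h := (Matrix.toEuclideanCLM (𝕜 := ℝ) B).le_opNorm (WithLp.toLp 2 p)
  rw [Matrix.toEuclideanCLM_toLp] at h
  rw [key, key, ← mul_pow]
  exact pow_le_pow_left₀ (norm_nonneg _) h 2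

/-- With `Q` symmetric (smallest eigenvalue `λ_min(Q)`), `B` a square real
matrix with ℓ2 operator norm `‖B‖₂`, `N ≥ 1`, 0–1 diagonal matrices `J⁽ⁱ⁾` and
`Ã = (1/N) Σᵢ J⁽ⁱ⁾ Q J⁽ⁱ⁾`: if `λ > -min(λ_min(Q), 0) ‖B‖₂²`, then `λ I + Bᵀ Ã B` is
positive definite, i.e. `⟨(λ I + Bᵀ Ã B) p, p⟩ > 0` for all `p ≠ 0`. -/
theorem hessian_posdef_of_large_lambda {n N : ℕ} (hN : 1 ≤ N)
    (Q : Matrix (Fin n) (Fin n) ℝ) (hQ : Q.IsHermitian)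
    (B : Matrix (Fin n) (Fin n) ℝ)
    (w : Fin N → Fin n → ℝ) (hw : ∀ i j, w i j = 0 ∨ w i j = 1)
    (Atil : Matrix (Fin n) (Fin n) ℝ)
    (hAtil : Atil = (1 / N : ℝ) •
      ∑ i : Fin N, Matrix.diagonal (w i) * Q * Matrix.diagonal (w i))
    (lam : ℝ)
    (hlam : lam > -(min (⨅ i, hQ.eigenvalues i) 0 * ‖Matrix.toEuclideanCLM (𝕜 := ℝ) B‖ ^ 2)) :
    ∀ p : Fin n → ℝ, p ≠ 0 →
      0 < (lam • (1 : Matrix (Fin n) (Fin n) ℝ) + Bᵀ * Atil * B).mulVec p ⬝ᵥ p := by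
  intro p hp
  set m := min (⨅ i, hQ.eigenvalues i) 0 with hm
  have hm0 : m ≤ 0 := min_le_right _ _
  have hme : ∀ i, m ≤ hQ.eigenvalues i := fun i =>
    (min_le_left _ _).trans (ciInf_le (Set.finite_range _).bddBelow i)
  have hpp : 0 < p ⬝ᵥ p := by
    have := dotProduct_star_self_pos_iff.2 hp
    simpa using this
  have hNpos : (0 : ℝ) < N := by exact_mod_cast hN
  have hA : ∀ x : Fin n → ℝ, m * (x ⬝ᵥ x) ≤ Atil.mulVec x ⬝ᵥ x := by
    intro x
    have hi : ∀ i : Fin N, m * (x ⬝ᵥ x) ≤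
        (Matrix.diagonal (w i) * Q * Matrix.diagonal (w i)).mulVec x ⬝ᵥ x := by
      intro i
      have e : (Matrix.diagonal (w i) * Q * Matrix.diagonal (w i)).mulVec x ⬝ᵥ x =
          Q.mulVec ((Matrix.diagonal (w i)).mulVec x) ⬝ᵥ ((Matrix.diagonal (w i)).mulVec x) := by
        rw [← Matrix.mulVec_mulVec, ← Matrix.mulVec_mulVec]
        simp only [dotProduct, Matrix.mulVec_diagonal]
        exact Finset.sum_congr rfl fun j _ => by ring
      rw [e]
      refine le_trans ?_ (quad_lower Q hQ m hme _)
      refine mul_le_mul_of_nonpos_left ?_ hm0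
      simp only [dotProduct, Matrix.mulVec_diagonal]
      refine Finset.sum_le_sum fun j _ => ?_
      rcases hw i j with h | h <;> simp [h, mul_self_nonneg]
    rw [hAtil, Matrix.smul_mulVec, Matrix.sum_mulVec, smul_dotProduct, sum_dotProduct, smul_eq_mul]
    have hs := Finset.sum_le_sum (s := Finset.univ) fun i _ => hi i
    rw [Finset.sum_const, Finset.card_univ, Fintype.card_fin, nsmul_eq_mul] at hs
    rw [one_div, le_inv_mul_iff₀ hNpos]
    exact hs
  have e : (lam • (1 : Matrix (Fin n) (Fin n) ℝ) + Bᵀ * Atil * B).mulVec p ⬝ᵥ p =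
      lam * (p ⬝ᵥ p) + Atil.mulVec (B.mulVec p) ⬝ᵥ B.mulVec p := by
    rw [Matrix.add_mulVec, add_dotProduct, Matrix.smul_mulVec, Matrix.one_mulVec, smul_dotProduct,
      smul_eq_mul, ← Matrix.mulVec_mulVec, ← Matrix.mulVec_mulVec, Matrix.mulVec_transpose,
      ← Matrix.dotProduct_mulVec]
  rw [e]
  have h1 := hA (B.mulVec p)
  have h2 := mul_le_mul_of_nonpos_left (norm_bound B p) hm0
  have h3 := mul_lt_mul_of_pos_right hlam hpp
  nlinarith
end

section
/- For every λ > 0, the function f : ℝ → ℝ defined by f(p) = (λ/2)·p² − min( 1/2, max(0, −p) ) is not convex on ℝ. (Concretely, for 0 < ε < min(1/λ, 1/2) one has (1/2)·f(−ε) + (1/2)·f(ε) = (λ/2)·ε² − ε/2 < 0 = f(0), violating the midpoint convexity inequality at the points −ε and ε.) -/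
/-- For every `λ > 0`, the function
`f(p) = (λ/2) p² - min(1/2, max(0, -p))` is not convex on `ℝ`; concretely, for every
`0 < ε < min(1/λ, 1/2)` the midpoint convexity inequality fails at `-ε` and `ε`:
`(1/2) f(-ε) + (1/2) f(ε) < f(0)`. -/
theorem scalar_objective_nonconvex (lam : ℝ) (hlam : 0 < lam) :
    ¬ ConvexOn ℝ Set.univ
        (fun p : ℝ => lam / 2 * p ^ 2 - min (1 / 2) (max 0 (-p))) ∧
      ∀ ε : ℝ, 0 < ε → ε < min (1 / lam) (1 / 2) →
        (1 / 2) * (lam / 2 * (-ε) ^ 2 - min (1 / 2) (max 0 (-(-ε)))) +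
            (1 / 2) * (lam / 2 * ε ^ 2 - min (1 / 2) (max 0 (-ε))) <
          lam / 2 * (0 : ℝ) ^ 2 - min (1 / 2) (max 0 (-(0 : ℝ))) := by
  have key : ∀ ε : ℝ, 0 < ε → ε < min (1 / lam) (1 / 2) →
        (1 / 2) * (lam / 2 * (-ε) ^ 2 - min (1 / 2) (max 0 (-(-ε)))) +
            (1 / 2) * (lam / 2 * ε ^ 2 - min (1 / 2) (max 0 (-ε))) <
          lam / 2 * (0 : ℝ) ^ 2 - min (1 / 2) (max 0 (-(0 : ℝ))) := by
    intro ε h0 h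
    obtain ⟨h1, h2⟩ := lt_min_iff.mp h
    have h3 : ε * lam < 1 := (lt_div_iff₀ hlam).mp h1
    have e1 : max 0 (-(-ε)) = ε := by rw [neg_neg]; exact max_eq_right h0.le
    have e2 : max 0 (-ε) = 0 := max_eq_left (by linarith)
    have e3 : max 0 (-(0 : ℝ)) = 0 := by simp
    have e4 : min (1 / 2) ε = ε := min_eq_right h2.le
    have e5 : min (1 / 2) (0 : ℝ) = 0 := min_eq_right (by norm_num)
    rw [e1, e2, e3, e4, e5]
    nlinarith [mul_pos h0 (sub_pos.mpr h3)]
  refine ⟨fun hc => ?_, key⟩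
  have hm : 0 < min (1 / lam) (1 / 2) := lt_min (by positivity) (by norm_num)
  obtain ⟨ε, h0, h1⟩ := exists_between hm
  have hk := key ε h0 h1
  have := hc.2 (Set.mem_univ (-ε)) (Set.mem_univ ε)
    (by norm_num : (0 : ℝ) ≤ 1 / 2) (by norm_num : (0 : ℝ) ≤ 1 / 2) (by norm_num)
  have e : (1 / 2 : ℝ) • (-ε) + (1 / 2 : ℝ) • ε = 0 := by simp
  rw [e] at this
  simp only [smul_eq_mul] at this
  exact absurd this (not_le.mpr hk)
end
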